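/- arXiv:0810.4352 — 9 statements merged into one kernel-verified Lean document; each statement's English description precedes it below -/
import Mathlib

section
/- Let f, g : ℝ → ℝ be three times differentiable functions such that f′(u)·g′(v) < 0 and f(u) ≠ g(v) for all u, v ∈ ℝ. Then for every (x,t) ∈ ℝ² the quantity −4 f′(x−t) g′(x+t)/(f(x−t) − g(x+t))² is strictly positive, and the function φ(x,t) = log(−4 f′(x−t) g′(x+t)/(f(x−t) − g(x+t))²) satisfies the Liouville equation ∂²φ/∂t² − ∂²φ/∂x² = −2 e^{φ(x,t)} at every point of ℝ². -/
/-!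
Write `φ = log (-4 f'(u) g'(v) / (f(u) - g(v))²)`. Along a line `s ↦ (u, v)` with velocity `(ε, 1)`,
the second derivative of `φ` is a sum of terms depending on `ε` only through `ε²`, plus `2 (ε f'(u) - g'(v))² / (f(u) - g(v))²`.
The `t`-direction has `ε = -1` and the `x`-direction has `ε = 1`, so in the difference of the two
second derivatives only the cross term `8 f'(u) g'(v) / (f(u) - g(v))²` survives, and this is
`-2 e^φ`. Both directions are handled at once by `deriv_deriv_log_liouville`.
-/

/-- The logarithmic derivative of the Liouville density along a line with velocity `(ε, 1)` in the
light-cone coordinates. -/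
lemma hasDerivAt_log_liouville (f g u v : ℝ → ℝ) (ε : ℝ)
    (hf1 : Differentiable ℝ f) (hf2 : Differentiable ℝ (deriv f))
    (hg1 : Differentiable ℝ g) (hg2 : Differentiable ℝ (deriv g))
    (hsign : ∀ a b : ℝ, deriv f a * deriv g b < 0) (hne : ∀ a b : ℝ, f a ≠ g b)
    (hu : ∀ s, HasDerivAt u ε s) (hv : ∀ s, HasDerivAt v 1 s) (s : ℝ) :
    HasDerivAt (fun s => Real.log (-4 * deriv f (u s) * deriv g (v s) /
        (f (u s) - g (v s)) ^ 2))
      (ε * deriv (deriv f) (u s) / deriv f (u s) + deriv (deriv g) (v s) / deriv g (v s)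
        - 2 * (ε * deriv f (u s) - deriv g (v s)) / (f (u s) - g (v s))) s := by
  have h1 := (hf1 (u s)).hasDerivAt.comp s (hu s)
  have h2 := (hf2 (u s)).hasDerivAt.comp s (hu s)
  have k1 := (hg1 (v s)).hasDerivAt.comp s (hv s)
  have k2 := (hg2 (v s)).hasDerivAt.comp s (hv s)
  have hf0 : deriv f (u s) ≠ 0 := left_ne_zero_of_mul (hsign (u s) (v s)).ne
  have hg0 : deriv g (v s) ≠ 0 := right_ne_zero_of_mul (hsign (u s) (v s)).ne
  have hD : f (u s) - g (v s) ≠ 0 := sub_ne_zero.mpr (hne _ _)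
  have H := (((h2.const_mul (-4)).mul k2).div ((h1.sub k1).pow 2) (pow_ne_zero 2 hD)).log
    (div_ne_zero (mul_ne_zero (mul_ne_zero (by norm_num) hf0) hg0) (pow_ne_zero 2 hD))
  refine H.congr_deriv ?_
  simp only [Function.comp_apply, Pi.mul_apply, Pi.sub_apply, Pi.pow_apply, Pi.div_apply]
  field_simp
  ring

/-- The second derivative of the logarithm of the Liouville density along a line with velocity
`(ε, 1)` in the light-cone coordinates. -/
lemma deriv_deriv_log_liouville (f g u v : ℝ → ℝ) (ε : ℝ)
    (hf1 : Differentiable ℝ f) (hf2 : Differentiable ℝ (deriv f))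
    (hf3 : Differentiable ℝ (deriv (deriv f)))
    (hg1 : Differentiable ℝ g) (hg2 : Differentiable ℝ (deriv g))
    (hg3 : Differentiable ℝ (deriv (deriv g)))
    (hsign : ∀ a b : ℝ, deriv f a * deriv g b < 0) (hne : ∀ a b : ℝ, f a ≠ g b)
    (hu : ∀ s, HasDerivAt u ε s) (hv : ∀ s, HasDerivAt v 1 s) (s : ℝ) :
    deriv (fun s' => deriv (fun s => Real.log (-4 * deriv f (u s) * deriv g (v s) /
        (f (u s) - g (v s)) ^ 2)) s') s =
      ε ^ 2 * (deriv (deriv (deriv f)) (u s) * deriv f (u s) - deriv (deriv f) (u s) ^ 2) /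
          deriv f (u s) ^ 2
        + (deriv (deriv (deriv g)) (v s) * deriv g (v s) - deriv (deriv g) (v s) ^ 2) /
          deriv g (v s) ^ 2
        - 2 * (ε ^ 2 * deriv (deriv f) (u s) - deriv (deriv g) (v s)) / (f (u s) - g (v s))
        + 2 * (ε * deriv f (u s) - deriv g (v s)) ^ 2 / (f (u s) - g (v s)) ^ 2 := by
  have e := funext fun s' => (hasDerivAt_log_liouville f g u v ε hf1 hf2 hg1 hg2 hsign hne
    hu hv s').deriv
  rw [e]
  have h1 := (hf1 (u s)).hasDerivAt.comp s (hu s)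
  have h2 := (hf2 (u s)).hasDerivAt.comp s (hu s)
  have h3 := (hf3 (u s)).hasDerivAt.comp s (hu s)
  have k1 := (hg1 (v s)).hasDerivAt.comp s (hv s)
  have k2 := (hg2 (v s)).hasDerivAt.comp s (hv s)
  have k3 := (hg3 (v s)).hasDerivAt.comp s (hv s)
  have hf0 : deriv f (u s) ≠ 0 := left_ne_zero_of_mul (hsign (u s) (v s)).ne
  have hg0 : deriv g (v s) ≠ 0 := right_ne_zero_of_mul (hsign (u s) (v s)).ne
  have hD : f (u s) - g (v s) ≠ 0 := sub_ne_zero.mpr (hne _ _)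
  have H := (((h3.const_mul ε).div h2 hf0).add (k3.div k2 hg0)).sub
    ((((h2.const_mul ε).sub k2).const_mul 2).div (h1.sub k1) hD)
  refine Eq.trans H.deriv ?_
  simp only [Function.comp_apply, Pi.sub_apply]
  field_simp
  ring


/-- **Liouville formula.** If `f, g : ℝ → ℝ` are three times differentiable with
`f′(u)·g′(v) < 0` and `f(u) ≠ g(v)` for all `u, v`, then
`−4 f′(x−t) g′(x+t)/(f(x−t) − g(x+t))²` is strictly positive, and
`φ(x,t) = log(−4 f′(x−t) g′(x+t)/(f(x−t) − g(x+t))²)` satisfies the Liouville equation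
`∂²φ/∂t² − ∂²φ/∂x² = −2 e^φ` everywhere on `ℝ²`. -/
theorem liouville_formula_solves_liouville_equation (f g : ℝ → ℝ)
    (hf1 : Differentiable ℝ f) (hf2 : Differentiable ℝ (deriv f))
    (hf3 : Differentiable ℝ (deriv (deriv f)))
    (hg1 : Differentiable ℝ g) (hg2 : Differentiable ℝ (deriv g))
    (hg3 : Differentiable ℝ (deriv (deriv g)))
    (hsign : ∀ u v : ℝ, deriv f u * deriv g v < 0)
    (hne : ∀ u v : ℝ, f u ≠ g v) :
    ∀ x t : ℝ,
      0 < -4 * deriv f (x - t) * deriv g (x + t) / (f (x - t) - g (x + t)) ^ 2 ∧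
      deriv (fun t' : ℝ => deriv (fun t'' : ℝ =>
          Real.log (-4 * deriv f (x - t'') * deriv g (x + t'') /
            (f (x - t'') - g (x + t'')) ^ 2)) t') t
        - deriv (fun x' : ℝ => deriv (fun x'' : ℝ =>
          Real.log (-4 * deriv f (x'' - t) * deriv g (x'' + t) /
            (f (x'' - t) - g (x'' + t)) ^ 2)) x') x
        = -2 * Real.exp (Real.log (-4 * deriv f (x - t) * deriv g (x + t) /
            (f (x - t) - g (x + t)) ^ 2)) := by
  intro x t
  have hD : f (x - t) - g (x + t) ≠ 0 := sub_ne_zero.mpr (hne _ _)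
  have hpos : 0 < -4 * deriv f (x - t) * deriv g (x + t) / (f (x - t) - g (x + t)) ^ 2 :=
    div_pos (by nlinarith [hsign (x - t) (x + t)]) (by positivity)
  refine ⟨hpos, ?_⟩
  rw [Real.exp_log hpos,
    deriv_deriv_log_liouville f g (fun s => x - s) (fun s => x + s) (-1) hf1 hf2 hf3 hg1 hg2 hg3
      hsign hne (fun s => (hasDerivAt_id s).const_sub x) (fun s => (hasDerivAt_id s).const_add x) t,
    deriv_deriv_log_liouville f g (fun s => s - t) (fun s => s + t) 1 hf1 hf2 hf3 hg1 hg2 hg3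
      hsign hne (fun s => (hasDerivAt_id s).sub_const t) (fun s => (hasDerivAt_id s).add_const t) x]
  ring
end

section
/- Let f, g : ℝ → ℝ be differentiable functions such that f′(u)·g′(v) < 0 and f(u) ≠ g(v) for all u, v ∈ ℝ, and let ε > 0. Then for every (x,t) ∈ ℝ² the denominator (f(u₋+ε) − f(u₋−ε))(g(u₊+ε) − g(u₊−ε)) is nonzero (so h_ε(x,t) is well defined), and h_ε satisfies the discrete Liouville equation h_ε(x, t+ε)·h_ε(x, t−ε) = (1 + h_ε(x+ε, t))(1 + h_ε(x−ε, t)) for all (x,t) ∈ ℝ². In particular χ_{m,n} := h_ε(mε, nε) satisfies χ_{m,n+1}·χ_{m,n−1} = (1 + χ_{m+1,n})(1 + χ_{m−1,n}) for all (m,n) ∈ ℤ². -/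
/-!
Rolle's theorem makes `f` and `g` injective, because the sign condition forbids zeros of either
derivative; hence the denominators do not vanish. For the cross-ratio
`h = -(a - c)(b - d) / ((a - b)(c - d))` one has `1 + h = -(a - d)(b - c) / ((a - b)(c - d))`.
Put `p = x - t`, `q = x + t`. Both sides of the equation involve only the values of `f` at `p`,
`p ± 2ε` and of `g` at `q`, `q ± 2ε`, and after this rewriting they have the same four factors
in the numerator and the same four factors in the denominator.
-/

/-- Volkov's discretized Liouville formula: the cross-ratio
`h_ε(x,t) = −(f(u₋+ε) − g(u₊+ε))(f(u₋−ε) − g(u₊−ε)) /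
  [(f(u₋+ε) − f(u₋−ε))(g(u₊+ε) − g(u₊−ε))]` with `u₋ = x − t`, `u₊ = x + t`. -/
noncomputable def hEps (f g : ℝ → ℝ) (ε x t : ℝ) : ℝ :=
  -((f (x - t + ε) - g (x + t + ε)) * (f (x - t - ε) - g (x + t - ε))) /
    ((f (x - t + ε) - f (x - t - ε)) * (g (x + t + ε) - g (x + t - ε)))

/-- A form of Rolle's theorem. -/
theorem injective_of_deriv_ne_zero {f : ℝ → ℝ} (hf : Differentiable ℝ f)
    (h : ∀ u, deriv f u ≠ 0) : Function.Injective f := by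
  have key : ∀ a b, a < b → f a ≠ f b := fun a b hab heq => by
    obtain ⟨c, -, hc⟩ := exists_deriv_eq_zero hab hf.continuous.continuousOn heq
    exact h c hc
  intro a b heq
  by_contra hab
  rcases lt_or_gt_of_ne hab with hlt | hlt
  · exact key a b hlt heq
  · exact key b a hlt heq.symm

/-- The cross-ratio identity behind the discrete Liouville equation. -/
theorem one_add_cross_ratio {a b c d : ℝ} (hab : a - b ≠ 0) (hcd : c - d ≠ 0) :
    1 + -((a - c) * (b - d)) / ((a - b) * (c - d))
      = -((a - d) * (b - c)) / ((a - b) * (c - d)) := by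
  field_simp
  ring

/-- If `f′(u)·g′(v) < 0` and `f(u) ≠ g(v)` for all `u, v`, and `ε > 0`, then the
denominator of `h_ε` never vanishes, `h_ε` satisfies the discrete Liouville equation
`h_ε(x, t+ε)·h_ε(x, t−ε) = (1 + h_ε(x+ε, t))(1 + h_ε(x−ε, t))`, and in particular
`χ_{m,n} := h_ε(mε, nε)` satisfies
`χ_{m,n+1}·χ_{m,n−1} = (1 + χ_{m+1,n})(1 + χ_{m−1,n})`. -/
theorem hEps_solves_discrete_liouville (f g : ℝ → ℝ)
    (hf : Differentiable ℝ f) (hg : Differentiable ℝ g)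
    (hsign : ∀ u v : ℝ, deriv f u * deriv g v < 0)
    (hne : ∀ u v : ℝ, f u ≠ g v) (ε : ℝ) (hε : 0 < ε) :
    (∀ x t : ℝ,
      (f (x - t + ε) - f (x - t - ε)) * (g (x + t + ε) - g (x + t - ε)) ≠ 0) ∧
    (∀ x t : ℝ,
      hEps f g ε x (t + ε) * hEps f g ε x (t - ε)
        = (1 + hEps f g ε (x + ε) t) * (1 + hEps f g ε (x - ε) t)) ∧
    (∀ m n : ℤ,
      hEps f g ε (m * ε) ((n + 1) * ε) * hEps f g ε (m * ε) ((n - 1) * ε)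
        = (1 + hEps f g ε ((m + 1) * ε) (n * ε)) *
          (1 + hEps f g ε ((m - 1) * ε) (n * ε))) := by
  have hfi : Function.Injective f :=
    injective_of_deriv_ne_zero hf fun u hu => by simpa [hu] using hsign u 0
  have hgi : Function.Injective g :=
    injective_of_deriv_ne_zero hg fun v hv => by simpa [hv] using hsign 0 v
  have hfd : ∀ u, f (u + ε) - f (u - ε) ≠ 0 := fun u h => by
    have := hfi (sub_eq_zero.mp h)
    linarith
  have hgd : ∀ v, g (v + ε) - g (v - ε) ≠ 0 := fun v h => by
    have := hgi (sub_eq_zero.mp h)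
    linarith
  have main : ∀ x t : ℝ, hEps f g ε x (t + ε) * hEps f g ε x (t - ε)
      = (1 + hEps f g ε (x + ε) t) * (1 + hEps f g ε (x - ε) t) := by
    intro x t
    unfold hEps
    rw [one_add_cross_ratio (hfd _) (hgd _), one_add_cross_ratio (hfd _) (hgd _)]
    rw [show x - (t + ε) + ε = x - t by ring, show x - (t + ε) - ε = x - t - 2 * ε by ring,
      show x + (t + ε) + ε = x + t + 2 * ε by ring, show x + (t + ε) - ε = x + t by ring,
      show x - (t - ε) + ε = x - t + 2 * ε by ring, show x - (t - ε) - ε = x - t by ring,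
      show x + (t - ε) + ε = x + t by ring, show x + (t - ε) - ε = x + t - 2 * ε by ring,
      show x + ε - t + ε = x - t + 2 * ε by ring, show x + ε - t - ε = x - t by ring,
      show x + ε + t + ε = x + t + 2 * ε by ring, show x + ε + t - ε = x + t by ring,
      show x - ε - t + ε = x - t by ring, show x - ε - t - ε = x - t - 2 * ε by ring,
      show x - ε + t + ε = x + t by ring, show x - ε + t - ε = x + t - 2 * ε by ring]
    rw [div_mul_div_comm, div_mul_div_comm]
    congr 1 <;> ring
  refine ⟨fun x t => mul_ne_zero (hfd _) (hgd _), main, fun m n => ?_⟩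
  simpa only [add_mul, sub_mul, one_mul] using main (m * ε) (n * ε)
end

section
/- Let f, g : ℝ → ℝ be differentiable functions such that f′(u)·g′(v) < 0 and f(u) ≠ g(v) for all u, v ∈ ℝ, and let ε > 0. Then for every (x,t) ∈ ℝ² the cross-ratio h_ε(x,t) is well defined and strictly positive: h_ε(x,t) > 0. -/
/-- By the intermediate value theorem, a nowhere vanishing continuous function on `ℝ` has
constant sign. -/
lemma mul_pos_of_continuous_of_ne_zero {φ : ℝ → ℝ} (hφ : Continuous φ) (h0 : ∀ s, φ s ≠ 0)
    (a b : ℝ) : 0 < φ a * φ b := by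
  by_contra! h
  have hzero : (0 : ℝ) ∈ Set.range φ := by
    rcases mul_nonpos_iff.mp h with ⟨ha, hb⟩ | ⟨ha, hb⟩
    · exact mem_range_of_exists_le_of_exists_ge hφ ⟨b, hb⟩ ⟨a, ha⟩
    · exact mem_range_of_exists_le_of_exists_ge hφ ⟨a, ha⟩ ⟨b, hb⟩
  obtain ⟨s, hs⟩ := hzero
  exact h0 s hs

lemma exists_sub_eq_deriv_mul {f : ℝ → ℝ} (hf : Differentiable ℝ f) {a b : ℝ} (hab : a < b) :
    ∃ c, f b - f a = deriv f c * (b - a) := by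
  obtain ⟨c, -, hc⟩ := exists_deriv_eq_slope f hab hf.continuous.continuousOn hf.differentiableOn
  exact ⟨c, by rw [hc, div_mul_cancel₀ _ (sub_pos.mpr hab).ne']⟩

/-- If `f′(u)·g′(v) < 0` and `f(u) ≠ g(v)` for all `u, v`, and `ε > 0`, then the
cross-ratio `h_ε` is well defined (nonvanishing denominator) and strictly positive. -/
theorem hEps_pos (f g : ℝ → ℝ)
    (hf : Differentiable ℝ f) (hg : Differentiable ℝ g)
    (hsign : ∀ u v : ℝ, deriv f u * deriv g v < 0)
    (hne : ∀ u v : ℝ, f u ≠ g v) (ε : ℝ) (hε : 0 < ε) :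
    ∀ x t : ℝ,
      (f (x - t + ε) - f (x - t - ε)) * (g (x + t + ε) - g (x + t - ε)) ≠ 0 ∧
      0 < hEps f g ε x t := by
  intro x t
  have hden : (f (x - t + ε) - f (x - t - ε)) * (g (x + t + ε) - g (x + t - ε)) < 0 := by
    obtain ⟨u, hu⟩ := exists_sub_eq_deriv_mul hf (show x - t - ε < x - t + ε by linarith)
    obtain ⟨v, hv⟩ := exists_sub_eq_deriv_mul hg (show x + t - ε < x + t + ε by linarith)
    rw [hu, hv]
    calc _ = deriv f u * deriv g v * (2 * ε) ^ 2 := by ring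
      _ < 0 := mul_neg_of_neg_of_pos (hsign u v) (by positivity)
  have hnum : 0 < (f (x - t + ε) - g (x + t + ε)) * (f (x - t - ε) - g (x + t - ε)) := by
    have hcf := hf.continuous
    have hcg := hg.continuous
    have hφ : Continuous fun s => f (x - t + s) - g (x + t + s) := by fun_prop
    simpa only [← sub_eq_add_neg] using
      mul_pos_of_continuous_of_ne_zero hφ (fun s => sub_ne_zero.mpr (hne _ _)) ε (-ε)
  exact ⟨hden.ne, div_pos_of_neg_of_neg (neg_neg_of_pos hnum) hden⟩
end

section
/- Let f, g : ℝ → ℝ be differentiable functions such that f′(u)·g′(v) < 0 and f(u) ≠ g(v) for all u, v ∈ ℝ, let L > 0, and let a, b, c, d ∈ ℝ with ad − bc = 1 be such that c·f(x) + d ≠ 0, c·g(x) + d ≠ 0, f(x+L) = (a f(x) + b)/(c f(x) + d) and g(x+L) = (a g(x) + b)/(c g(x) + d) for all x ∈ ℝ. Then for every ε > 0 the cross-ratio h_ε is periodic in the space variable: h_ε(x + L, t) = h_ε(x, t) for all (x,t) ∈ ℝ². -/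
/-- The difference formula for a Möbius map of determinant one. -/
lemma moebius_sub (a b c d p q : ℝ) (hdet : a * d - b * c = 1)
    (hp : c * p + d ≠ 0) (hq : c * q + d ≠ 0) :
    (a * p + b) / (c * p + d) - (a * q + b) / (c * q + d) =
      (p - q) / ((c * p + d) * (c * q + d)) := by
  rw [div_sub_div _ _ hp hq]
  congr 1
  linear_combination (p - q) * hdet

/-- If `f, g` are quasi-periodic with a common monodromy matrix in `SL(2,ℝ)`,
then the cross-ratio `h_ε` is periodic in the space variable:
`h_ε(x + L, t) = h_ε(x, t)`. -/
theorem hEps_periodic (f g : ℝ → ℝ)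
    (hf : Differentiable ℝ f) (hg : Differentiable ℝ g)
    (hsign : ∀ u v : ℝ, deriv f u * deriv g v < 0)
    (hne : ∀ u v : ℝ, f u ≠ g v)
    (L : ℝ) (hL : 0 < L) (a b c d : ℝ) (hdet : a * d - b * c = 1)
    (hcf : ∀ x : ℝ, c * f x + d ≠ 0) (hcg : ∀ x : ℝ, c * g x + d ≠ 0)
    (hfq : ∀ x : ℝ, f (x + L) = (a * f x + b) / (c * f x + d))
    (hgq : ∀ x : ℝ, g (x + L) = (a * g x + b) / (c * g x + d)) :
    ∀ ε : ℝ, 0 < ε → ∀ x t : ℝ, hEps f g ε (x + L) t = hEps f g ε x t := by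
  intro ε _ x t
  unfold hEps
  have e1 : x + L - t + ε = (x - t + ε) + L := by ring
  have e2 : x + L - t - ε = (x - t - ε) + L := by ring
  have e3 : x + L + t + ε = (x + t + ε) + L := by ring
  have e4 : x + L + t - ε = (x + t - ε) + L := by ring
  rw [e1, e2, e3, e4, hfq, hfq, hgq, hgq]
  have h1 := hcf (x - t + ε)
  have h2 := hcf (x - t - ε)
  have h3 := hcg (x + t + ε)
  have h4 := hcg (x + t - ε)
  rw [moebius_sub a b c d _ _ hdet h1 h3, moebius_sub a b c d _ _ hdet h2 h4,
    moebius_sub a b c d _ _ hdet h1 h2, moebius_sub a b c d _ _ hdet h3 h4]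
  generalize f (x - t + ε) = p at *
  generalize f (x - t - ε) = q at *
  generalize g (x + t + ε) = r at *
  generalize g (x + t - ε) = s at *
  -- The common factor cancels even if the denominator of `hEps` vanishes.
  have hK : ((c * p + d) * (c * q + d) * (c * r + d) * (c * s + d))⁻¹ ≠ 0 :=
    inv_ne_zero (mul_ne_zero (mul_ne_zero (mul_ne_zero h1 h2) h3) h4)
  rw [← mul_div_mul_left (-((p - r) * (q - s))) ((p - q) * (r - s)) hK]
  congr 1
  · simp only [div_eq_mul_inv, mul_inv]
    ring
  · simp only [div_eq_mul_inv, mul_inv]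
    ring
end

section
/- Let f, g : ℝ → ℝ be differentiable functions such that f′(u)·g′(v) < 0 and f(u) ≠ g(v) for all u, v ∈ ℝ, let L > 0, and let a, b, c, d ∈ ℝ with ad − bc = 1 be such that c·f(x) + d ≠ 0, c·g(x) + d ≠ 0, f(x+L) = (a f(x) + b)/(c f(x) + d) and g(x+L) = (a g(x) + b)/(c g(x) + d) for all x ∈ ℝ. Let M, N be positive integers and set ε = L·M/N. Then the lattice field χ_{m,n} := h_ε(mε, nε) is N-periodic in the space direction: χ_{m+N, n} = χ_{m,n} for all (m,n) ∈ ℤ². -/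
/-- A Möbius map of determinant one divides the difference of two points by the product of
their denominators. -/
theorem mobius_sub {a b c d : ℝ} (hdet : a * d - b * c = 1) {p q : ℝ}
    (hp : c * p + d ≠ 0) (hq : c * q + d ≠ 0) :
    (a * p + b) / (c * p + d) - (a * q + b) / (c * q + d) =
      (p - q) / ((c * p + d) * (c * q + d)) := by
  rw [div_sub_div _ _ hp hq]
  congr 1
  linear_combination (p - q) * hdet

/-- Möbius invariance of the cross-ratio. The points need not be distinct: each point occurs once
in the numerator and once in the denominator, so the same nonzero factor is cancelled from both,
and the identity persists when the denominator vanishes and the quotient is zero by convention. -/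
theorem cross_ratio_mobius {a b c d : ℝ} (hdet : a * d - b * c = 1) {p q r s : ℝ}
    (hp : c * p + d ≠ 0) (hq : c * q + d ≠ 0) (hr : c * r + d ≠ 0) (hs : c * s + d ≠ 0) :
    -(((a * p + b) / (c * p + d) - (a * q + b) / (c * q + d)) *
        ((a * r + b) / (c * r + d) - (a * s + b) / (c * s + d))) /
      (((a * p + b) / (c * p + d) - (a * r + b) / (c * r + d)) *
        ((a * q + b) / (c * q + d) - (a * s + b) / (c * s + d))) =
      -((p - q) * (r - s)) / ((p - r) * (q - s)) := by
  rw [mobius_sub hdet hp hq, mobius_sub hdet hr hs, mobius_sub hdet hp hr, mobius_sub hdet hq hs]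
  have hK : ((c * p + d) * (c * q + d) * (c * r + d) * (c * s + d))⁻¹ ≠ 0 := by positivity
  rw [← mul_div_mul_right _ ((p - r) * (q - s)) hK]
  congr 1 <;> field_simp

theorem hEps_add_period {f g : ℝ → ℝ} {L a b c d : ℝ} (hdet : a * d - b * c = 1)
    (hcf : ∀ x : ℝ, c * f x + d ≠ 0) (hcg : ∀ x : ℝ, c * g x + d ≠ 0)
    (hfq : ∀ x : ℝ, f (x + L) = (a * f x + b) / (c * f x + d))
    (hgq : ∀ x : ℝ, g (x + L) = (a * g x + b) / (c * g x + d)) (ε x t : ℝ) :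
    hEps f g ε (x + L) t = hEps f g ε x t := by
  unfold hEps
  rw [show x + L - t + ε = x - t + ε + L by ring, show x + L - t - ε = x - t - ε + L by ring,
    show x + L + t + ε = x + t + ε + L by ring, show x + L + t - ε = x + t - ε + L by ring,
    hfq, hfq, hgq, hgq]
  exact cross_ratio_mobius hdet (hcf _) (hcg _) (hcf _) (hcg _)

/-- If `f, g` are quasi-periodic with period `L` and a common monodromy matrix in
`SL(2,ℝ)`, and `ε = L·M/N` for positive integers `M, N`, then the lattice field
`χ_{m,n} = h_ε(mε, nε)` is `N`-periodic in the space direction: `χ_{m+N,n} = χ_{m,n}`. -/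
theorem chi_space_periodic (f g : ℝ → ℝ)
    (hf : Differentiable ℝ f) (hg : Differentiable ℝ g)
    (hsign : ∀ u v : ℝ, deriv f u * deriv g v < 0)
    (hne : ∀ u v : ℝ, f u ≠ g v)
    (L : ℝ) (hL : 0 < L) (a b c d : ℝ) (hdet : a * d - b * c = 1)
    (hcf : ∀ x : ℝ, c * f x + d ≠ 0) (hcg : ∀ x : ℝ, c * g x + d ≠ 0)
    (hfq : ∀ x : ℝ, f (x + L) = (a * f x + b) / (c * f x + d))
    (hgq : ∀ x : ℝ, g (x + L) = (a * g x + b) / (c * g x + d))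
    (M N : ℕ) (hM : 0 < M) (hN : 0 < N) (ε : ℝ) (hε : ε = L * M / N) :
    ∀ m n : ℤ,
      hEps f g ε ((m + N) * ε) (n * ε) = hEps f g ε (m * ε) (n * ε) := by
  intro m n
  have hper : Function.Periodic (fun x => hEps f g ε x (n * ε)) L := fun x =>
    hEps_add_period hdet hcf hcg hfq hgq ε x (n * ε)
  have hN0 : (N : ℝ) ≠ 0 := by positivity
  have hshift : ((m : ℝ) + N) * ε = m * ε + M * L := by
    rw [hε]
    field_simp
  rw [hshift]
  exact hper.nat_mul M (m * ε)
end

section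
/- Fix an integer N ≥ 1. For a 2N-periodic strictly positive sequence f : ℤ → ℝ_{>0} (f_{j+2N} = f_j for all j) define F(f) : ℤ → ℝ by F(f)_{2j} = 1/f_{2j−1} and F(f)_{2j+1} = f_{2j}(1 + f_{2j−1})(1 + f_{2j+1}) for all j ∈ ℤ. Then: (i) F(f) is again strictly positive and 2N-periodic; (ii) defining iterates f^{(0)} = f and f^{(t+1)} = F(f^{(t)}) for t ≥ 0, and setting χ_{m,n} := f^{(n)}_{m+n} for all m, n ∈ ℤ with n ≥ 0 and m + n odd, the field χ is 2N-periodic in m (χ_{m+2N,n} = χ_{m,n}) and satisfies the discrete Liouville equation χ_{m,n+1}·χ_{m,n−1} = (1 + χ_{m−1,n})(1 + χ_{m+1,n}) for all m, n ∈ ℤ with n ≥ 1 and m + n even. -/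
/-! Positivity and `2N`-periodicity are preserved by a single application of `F` (the shift `2N` is
even, so it respects the case split on parity), hence by all iterates. The Liouville equation
involves only two steps from `g = F^[n-1] f`: for even `k`,
`F(F g)_{k+1} = (F g)_k (1 + (F g)_{k-1}) (1 + (F g)_{k+1})` and `(F g)_k = 1 / g_{k-1}`, so
multiplying by `g_{k-1} ≠ 0` gives the equation at `k = m + n`. -/

/-- The action of the mapping class `D^{1/N}` on the Fock coordinates of an
ideally triangulated annulus: `F(f)_{2j} = 1/f_{2j−1}` and
`F(f)_{2j+1} = f_{2j}(1 + f_{2j−1})(1 + f_{2j+1})`. -/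
noncomputable def liouvilleFlip (f : ℤ → ℝ) : ℤ → ℝ := fun m =>
  if m % 2 = 0 then 1 / f (m - 1) else f (m - 1) * (1 + f (m - 2)) * (1 + f m)

theorem liouvilleFlip_pos {f : ℤ → ℝ} (hpos : ∀ j, 0 < f j) (j : ℤ) :
    0 < liouvilleFlip f j := by
  have h₀ := hpos j
  have h₁ := hpos (j - 1)
  have h₂ := hpos (j - 2)
  unfold liouvilleFlip
  split_ifs <;> positivity

theorem liouvilleFlip_periodic {N : ℕ} {f : ℤ → ℝ} (hper : ∀ j : ℤ, f (j + 2 * N) = f j)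
    (j : ℤ) : liouvilleFlip f (j + 2 * N) = liouvilleFlip f j := by
  have h₁ : f (j + 2 * N - 1) = f (j - 1) := by rw [← hper (j - 1)]; congr 1; ring
  have h₂ : f (j + 2 * N - 2) = f (j - 2) := by rw [← hper (j - 2)]; congr 1; ring
  have hpar : (j + 2 * (N : ℤ)) % 2 = j % 2 := by omega
  simp only [liouvilleFlip, hpar, h₁, h₂, hper j]

theorem liouvilleFlip_iterate {N : ℕ} {f : ℤ → ℝ} (hpos : ∀ j, 0 < f j)
    (hper : ∀ j : ℤ, f (j + 2 * N) = f j) (n : ℕ) :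
    (∀ j, 0 < (liouvilleFlip^[n] f) j) ∧
      ∀ j : ℤ, (liouvilleFlip^[n] f) (j + 2 * N) = (liouvilleFlip^[n] f) j := by
  induction n with
  | zero => exact ⟨hpos, hper⟩
  | succ n ih =>
    rw [Function.iterate_succ_apply']
    exact ⟨liouvilleFlip_pos ih.1, liouvilleFlip_periodic ih.2⟩

/-- The discrete Liouville equation at the even site `k`, for three consecutive iterates
`g`, `F g`, `F (F g)`. -/
theorem liouvilleFlip_flip_mul {g : ℤ → ℝ} {k : ℤ} (hk : k % 2 = 0) (hg : g (k - 1) ≠ 0) :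
    liouvilleFlip (liouvilleFlip g) (k + 1) * g (k - 1) =
      (1 + liouvilleFlip g (k - 1)) * (1 + liouvilleFlip g (k + 1)) := by
  have hodd : ¬ (k + 1) % 2 = 0 := by omega
  have heven : liouvilleFlip g k = 1 / g (k - 1) := if_pos hk
  have hstep : liouvilleFlip (liouvilleFlip g) (k + 1) =
      liouvilleFlip g (k + 1 - 1) * (1 + liouvilleFlip g (k + 1 - 2)) *
        (1 + liouvilleFlip g (k + 1)) := if_neg hodd
  rw [hstep, show k + 1 - 1 = k by ring, show k + 1 - 2 = k - 1 by ring, heven]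
  field_simp

/-- For a strictly positive `2N`-periodic sequence `f`, the map `F` preserves
positivity and `2N`-periodicity, and the iterates `χ_{m,n} = (F^[n] f)_{m+n}`
(on the sublattice `m + n` odd) are `2N`-periodic in `m` and satisfy the
discrete Liouville equation
`χ_{m,n+1}·χ_{m,n−1} = (1 + χ_{m−1,n})(1 + χ_{m+1,n})` for `n ≥ 1`, `m + n` even. -/
theorem mapping_class_discrete_liouville (N : ℕ) (hN : 1 ≤ N) (f : ℤ → ℝ)
    (hpos : ∀ j : ℤ, 0 < f j) (hper : ∀ j : ℤ, f (j + 2 * N) = f j) :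
    ((∀ j : ℤ, 0 < liouvilleFlip f j) ∧
      (∀ j : ℤ, liouvilleFlip f (j + 2 * N) = liouvilleFlip f j)) ∧
    (∀ (m : ℤ) (n : ℕ), (m + n) % 2 = 1 →
      (liouvilleFlip^[n] f) (m + 2 * N + n) = (liouvilleFlip^[n] f) (m + n)) ∧
    (∀ (m : ℤ) (n : ℕ), 1 ≤ n → (m + n) % 2 = 0 →
      (liouvilleFlip^[n + 1] f) (m + n + 1) * (liouvilleFlip^[n - 1] f) (m + n - 1)
        = (1 + (liouvilleFlip^[n] f) (m - 1 + n)) *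
          (1 + (liouvilleFlip^[n] f) (m + 1 + n))) := by
  refine ⟨⟨liouvilleFlip_pos hpos, liouvilleFlip_periodic hper⟩, ?_, ?_⟩
  · intro m n _
    rw [add_right_comm]
    exact (liouvilleFlip_iterate hpos hper n).2 (m + n)
  · intro m n hn hmn
    obtain ⟨n, rfl⟩ := Nat.exists_eq_add_of_le' hn
    have h := liouvilleFlip_flip_mul (g := liouvilleFlip^[n] f) hmn
      ((liouvilleFlip_iterate hpos hper n).1 _).ne'
    rw [Nat.add_sub_cancel, Function.iterate_succ_apply', Function.iterate_succ_apply', h,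
      show m - 1 + ((n + 1 : ℕ) : ℤ) = m + ((n + 1 : ℕ) : ℤ) - 1 by ring,
      show m + 1 + ((n + 1 : ℕ) : ℤ) = m + ((n + 1 : ℕ) : ℤ) + 1 by ring]
end

section
/- Let b ∈ ℂ with Re b > 0 and Im b > 0, and let φ_b be the non-compact quantum dilogarithm given by the product formula. Then for every z ∈ ℂ at which the denominator products defining φ_b(z + ib/2) and φ_b(z − ib/2) are nonzero, one has the functional equation φ_b(z + ib/2) = (1 + e^{2πzb})·φ_b(z − ib/2). -/
/-!
The shift `z ↦ z + ib` multiplies `e^{2πz/b}` by `e^{2πi} = 1`, so the numerator products at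
`z ± ib/2` agree. In the denominator, `2π(z − ib/2 + c_b)b = 2πzb + πi`, so the two denominator
products are `(x; q²)_∞` (at `z − ib/2`) and `(x q²; q²)_∞` (at `z + ib/2`) with `x = −e^{2πzb}`.
The equation is therefore the recursion `(x; y)_∞ = (1 − x) (x y; y)_∞`, which only needs `|y| < 1`.
-/


open Complex

/-- The infinite product `(x;y)_∞ = ∏_{j=0}^∞ (1 − x yʲ)`. -/
noncomputable def qPochInf (x y : ℂ) : ℂ := ∏' j : ℕ, (1 - x * y ^ j)

/-- `c_b = i(b + b⁻¹)/2`. -/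
noncomputable def cb (b : ℂ) : ℂ := Complex.I * (b + b⁻¹) / 2

/-- Numerator product of the non-compact quantum dilogarithm:
`(e^{2π(z−c_b)b⁻¹}; q̄²)_∞` with `q̄² = e^{−2πib⁻²}`. -/
noncomputable def phibNum (b z : ℂ) : ℂ :=
  qPochInf (Complex.exp (2 * (Real.pi : ℂ) * (z - cb b) * b⁻¹))
    (Complex.exp (-(2 * (Real.pi : ℂ) * Complex.I * b⁻¹ ^ 2)))

/-- Denominator product of the non-compact quantum dilogarithm:
`(e^{2π(z+c_b)b}; q²)_∞` with `q² = e^{2πib²}`. -/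
noncomputable def phibDen (b z : ℂ) : ℂ :=
  qPochInf (Complex.exp (2 * (Real.pi : ℂ) * (z + cb b) * b))
    (Complex.exp (2 * (Real.pi : ℂ) * Complex.I * b ^ 2))

/-- The non-compact quantum dilogarithm, in product form. -/
noncomputable def phib (b z : ℂ) : ℂ := phibNum b z / phibDen b z

theorem qPochInf_eq_one_sub_mul (x y : ℂ) (hy : ‖y‖ < 1) :
    qPochInf x y = (1 - x) * qPochInf (x * y) y := by
  have hm : Multipliable fun j : ℕ => 1 - x * y ^ (j + 1) := by
    have hs : Summable fun j : ℕ => ‖-(x * y ^ (j + 1))‖ := by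
      have h := (summable_geometric_of_lt_one (norm_nonneg y) hy).mul_left (‖x‖ * ‖y‖)
      refine h.congr fun j => ?_
      rw [norm_neg, norm_mul, norm_pow]
      ring
    simpa only [sub_eq_add_neg] using multipliable_one_add_of_summable hs
  unfold qPochInf
  rw [tprod_eq_zero_mul' (f := fun j : ℕ => 1 - x * y ^ j) hm]
  simp only [pow_zero, mul_one, pow_succ', mul_assoc]

theorem norm_exp_two_pi_I_mul_sq_lt_one (b : ℂ) (hre : 0 < b.re) (him : 0 < b.im) :
    ‖Complex.exp (2 * (Real.pi : ℂ) * Complex.I * b ^ 2)‖ < 1 := by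
  rw [Complex.norm_exp, Real.exp_lt_one_iff]
  have h : (2 * (Real.pi : ℂ) * Complex.I * b ^ 2).re = -(4 * Real.pi * (b.re * b.im)) := by
    simp [pow_two]
    ring
  rw [h]
  have := Real.pi_pos
  have : 0 < 4 * Real.pi * (b.re * b.im) := by positivity
  linarith

theorem phibNum_add_eq_phibNum_sub (b z : ℂ) (hb : b ≠ 0) :
    phibNum b (z + Complex.I * b / 2) = phibNum b (z - Complex.I * b / 2) := by
  have h : 2 * (Real.pi : ℂ) * (z + Complex.I * b / 2 - cb b) * b⁻¹
      = 2 * (Real.pi : ℂ) * (z - Complex.I * b / 2 - cb b) * b⁻¹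
        + 2 * (Real.pi : ℂ) * Complex.I := by
    field_simp
    ring
  unfold phibNum
  rw [h, Complex.exp_periodic]

theorem phibDen_sub_eq (b z : ℂ) (hre : 0 < b.re) (him : 0 < b.im) :
    phibDen b (z - Complex.I * b / 2)
      = (1 + Complex.exp (2 * (Real.pi : ℂ) * z * b)) * phibDen b (z + Complex.I * b / 2) := by
  have hb : b ≠ 0 := by
    rintro rfl
    simp at hre
  have h1 : 2 * (Real.pi : ℂ) * (z - Complex.I * b / 2 + cb b) * b
      = 2 * (Real.pi : ℂ) * z * b + (Real.pi : ℂ) * Complex.I := by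
    unfold cb
    field_simp
    ring
  have h2 : 2 * (Real.pi : ℂ) * (z + Complex.I * b / 2 + cb b) * b
      = 2 * (Real.pi : ℂ) * (z - Complex.I * b / 2 + cb b) * b
        + 2 * (Real.pi : ℂ) * Complex.I * b ^ 2 := by
    ring
  unfold phibDen
  rw [qPochInf_eq_one_sub_mul _ _ (norm_exp_two_pi_I_mul_sq_lt_one b hre him), h2, Complex.exp_add,
    h1, Complex.exp_add, Complex.exp_pi_mul_I]
  ring

/-- Shift functional equation for the non-compact quantum dilogarithm:
`φ_b(z + ib/2) = (1 + e^{2πzb}) φ_b(z − ib/2)` wherever both sides are defined. -/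
theorem phib_shift_b (b : ℂ) (hre : 0 < b.re) (him : 0 < b.im) :
    ∀ z : ℂ, phibDen b (z + Complex.I * b / 2) ≠ 0 →
      phibDen b (z - Complex.I * b / 2) ≠ 0 →
      phib b (z + Complex.I * b / 2)
        = (1 + Complex.exp (2 * (Real.pi : ℂ) * z * b)) *
          phib b (z - Complex.I * b / 2) := by
  intro z hplus hminus
  have hb : b ≠ 0 := by
    rintro rfl
    simp at hre
  have hden := phibDen_sub_eq b z hre him
  have hfac : 1 + Complex.exp (2 * (Real.pi : ℂ) * z * b) ≠ 0 := by
    intro h0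
    rw [h0, zero_mul] at hden
    exact hminus hden
  unfold phib
  rw [phibNum_add_eq_phibNum_sub b z hb, hden, ← mul_div_assoc, mul_div_mul_left _ _ hfac]
end

section
/- Let b ∈ ℂ with Re b > 0 and Im b > 0, and let φ_b be the non-compact quantum dilogarithm given by the product formula. Then for every z ∈ ℂ at which the denominator products defining φ_b(z) and φ_b(−z) are nonzero, one has the inversion relation φ_b(z)·φ_b(−z) = e^{−iπz²}·ζ_inv, where ζ_inv = e^{iπ(1+2c_b²)/6}. -/
/-!
Put `τ = b²`, which lies in the upper half-plane, and `u = -i b z`. Since `2π c_b b = iπ(b² + 1)`,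
the product of the two denominators is `(-q w; q²)_∞ (-q/w; q²)_∞` with `q = e^{iπτ}`, `w = e^{2πiu}`,
which by the Jacobi triple product is `θ(u, τ) / P(τ)`, where `P(τ) = ∏_{j ≥ 1} (1 - e^{2πijτ})`. In the same way
the product of the two numerators is `θ(u/τ, -1/τ) / P(-1/τ)`. The functional equation of `θ` under
`τ ↦ -1/τ` gives the factor `e^{-iπz²}`, and the corresponding transformation of the Dedekind eta
function `η(τ) = e^{2πiτ/24} P(τ)` evaluates the remaining constant: the square roots cancel, and
the leading exponentials combine to `e^{-iπ(τ + 1/τ)/12} = ζ_inv`.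

Both transformation laws are in Mathlib (`theta_step` and `eta_step` recast them for the bare
products). The triple product `jacobiTheta₂_eq_prod` is proved here by letting `n → ∞` in
its finite version, `hasSum_finite_triple`,
`∏_{i<n} (1 + q^{2i+1} w)(1 + q^{2i+1}/w) = ∑_k [2n, n+k]_{q²} q^{k²} w^k`.
-/

open Complex

open scoped Real Topology
open Filter

namespace PhibInversion

/-! ### Finite triple product -/

/-- The finite product `(p;p)_m = ∏_{j=1}^m (1 - p^j)`. -/
noncomputable def qFac (p : ℂ) (m : ℕ) : ℂ := ∏ j ∈ Finset.range m, (1 - p ^ (j + 1))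

/-- The reciprocal `1/(p;p)_m`, extended by zero to negative integers `m`. With this convention
the recurrence `1/(p;p)_{m-1} = (1 - p^m)/(p;p)_m` holds for all `m : ℤ`. -/
noncomputable def qFacInv (p : ℂ) (m : ℤ) : ℂ := if 0 ≤ m then (qFac p m.toNat)⁻¹ else 0

lemma one_sub_pow_succ_ne_zero {p : ℂ} (hp : ‖p‖ < 1) (j : ℕ) : 1 - p ^ (j + 1) ≠ 0 := by
  intro h
  have h1 : ‖p ^ (j + 1)‖ < 1 := by
    rw [norm_pow]; exact pow_lt_one₀ (norm_nonneg _) hp (by omega)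
  rw [← sub_eq_zero.mp h] at h1
  simp at h1

lemma qFac_ne_zero {p : ℂ} (hp : ‖p‖ < 1) (m : ℕ) : qFac p m ≠ 0 :=
  Finset.prod_ne_zero_iff.mpr fun j _ => one_sub_pow_succ_ne_zero hp j

lemma qFac_succ (p : ℂ) (m : ℕ) : qFac p (m + 1) = qFac p m * (1 - p ^ (m + 1)) :=
  Finset.prod_range_succ _ _

lemma qFacInv_sub_one {p : ℂ} (hp : ‖p‖ < 1) (m : ℤ) :
    qFacInv p (m - 1) = (1 - p ^ m) * qFacInv p m := by
  rcases lt_trichotomy m 0 with h | h | h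
  · simp [qFacInv, show ¬ (1 ≤ m) by omega, show ¬ (0 ≤ m) by omega]
  · subst h; simp [qFacInv]
  · obtain ⟨j, rfl⟩ : ∃ j : ℕ, m = j + 1 := ⟨(m - 1).toNat, by omega⟩
    have h1 : ((j : ℤ) + 1).toNat = j + 1 := by omega
    have h2 : (0 : ℤ) ≤ j + 1 := by omega
    have h3 := one_sub_pow_succ_ne_zero hp j
    have h4 := qFac_ne_zero hp j
    have h5 : p ^ ((j : ℤ) + 1) = p ^ (j + 1) := by exact_mod_cast zpow_natCast p (j + 1)
    simp only [qFacInv, add_sub_cancel_right, h1, h2, qFac_succ, h5, if_true, Int.toNat_natCast,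
      Int.natCast_nonneg]
    field_simp

/-- The finite Jacobi triple product, with the `q²`-binomial coefficient `[2n, n+k]` written as
`(q²;q²)_{2n} / ((q²;q²)_{n-k} (q²;q²)_{n+k})`. Only finitely many terms are nonzero. -/
lemma hasSum_finite_triple {q w : ℂ} (hq0 : q ≠ 0) (hq : ‖q‖ < 1) (hw : w ≠ 0) (n : ℕ) :
    HasSum (fun k : ℤ => qFac (q ^ 2) (2 * n) * qFacInv (q ^ 2) (n - k) * qFacInv (q ^ 2) (n + k)
        * (q ^ (k ^ 2) * w ^ k))
      (∏ i ∈ Finset.range n, ((1 + q ^ (2 * i + 1) * w) * (1 + q ^ (2 * i + 1) * w⁻¹))) := by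
  have hp : ‖q ^ 2‖ < 1 := by rw [norm_pow]; exact pow_lt_one₀ (norm_nonneg _) hq (by omega)
  induction n with
  | zero =>
    rw [Finset.prod_range_zero]
    have h0 := hasSum_ite_eq (0 : ℤ) (1 : ℂ)
    refine h0.congr_fun fun k => ?_
    rcases lt_trichotomy k 0 with h | h | h
    · simp [qFacInv, show ¬ (0 ≤ k) by omega, h.ne]
    · subst h; simp [qFacInv, qFac]
    · simp [qFacInv, show ¬ (k ≤ 0) by omega, h.ne']
  | succ n ih =>
    set s := q ^ (2 * n + 1) with hs
    set T := ∏ i ∈ Finset.range n, ((1 + q ^ (2 * i + 1) * w) * (1 + q ^ (2 * i + 1) * w⁻¹))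
      with hT
    have h2 := (Equiv.subRight (1 : ℤ)).hasSum_iff.mpr ih
    have h3 := (Equiv.addRight (1 : ℤ)).hasSum_iff.mpr ih
    have h4 := ((ih.mul_left (1 + s ^ 2)).add (h2.mul_left (s * w))).add (h3.mul_left (s * w⁻¹))
    have hww : w * w⁻¹ = 1 := mul_inv_cancel₀ hw
    have hS : ∏ i ∈ Finset.range (n + 1),
        ((1 + q ^ (2 * i + 1) * w) * (1 + q ^ (2 * i + 1) * w⁻¹))
        = (1 + s ^ 2) * T + s * w * T + s * w⁻¹ * T := by
      rw [Finset.prod_range_succ, ← hs, ← hT]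
      linear_combination (s ^ 2 * T) * hww
    rw [hS]
    refine h4.congr_fun fun k => ?_
    simp only [Function.comp, Equiv.coe_addRight, Equiv.subRight_apply]
    -- All the reciprocals `1/(q²;q²)_m` are expressed through those with `m = n + 1 ± k`; what is
    -- left is a rational identity in `q`, `q^n` and `q^{2k}`.
    have e1 : qFacInv (q ^ 2) (n - k)
        = (1 - (q ^ 2) ^ ((n : ℤ) + 1 - k)) * qFacInv (q ^ 2) (n + 1 - k) := by
      rw [← qFacInv_sub_one hp]; congr 1; ring
    have e2 : qFacInv (q ^ 2) (n + k)
        = (1 - (q ^ 2) ^ ((n : ℤ) + 1 + k)) * qFacInv (q ^ 2) (n + 1 + k) := by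
      rw [← qFacInv_sub_one hp]; congr 1; ring
    have e3 : qFacInv (q ^ 2) (n - (k + 1))
        = (1 - (q ^ 2) ^ ((n : ℤ) - k)) * qFacInv (q ^ 2) (n - k) := by
      rw [← qFacInv_sub_one hp]; congr 1; ring
    have e4 : qFacInv (q ^ 2) (n + (k - 1))
        = (1 - (q ^ 2) ^ ((n : ℤ) + k)) * qFacInv (q ^ 2) (n + k) := by
      rw [← qFacInv_sub_one hp]; congr 1; ring
    have e5 : qFacInv (q ^ 2) (n - (k - 1)) = qFacInv (q ^ 2) (n + 1 - k) := by congr 1; ring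
    have e6 : qFacInv (q ^ 2) (n + (k + 1)) = qFacInv (q ^ 2) (n + 1 + k) := by congr 1; ring
    rw [e3, e4, e5, e6, e1, e2, show 2 * (n + 1) = 2 * n + 1 + 1 by ring, qFac_succ, qFac_succ]
    push_cast
    generalize qFacInv (q ^ 2) (n + 1 - k) = R
    generalize qFacInv (q ^ 2) (n + 1 + k) = S
    generalize qFac (q ^ 2) (2 * n) = E
    have hq2 : q ^ 2 ≠ 0 := pow_ne_zero _ hq0
    have hY : (q ^ 2) ^ k ≠ 0 := zpow_ne_zero _ hq2
    have z1 : q ^ ((k - 1) ^ 2) = q ^ (k ^ 2) * q / (q ^ 2) ^ k := by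
      rw [show (k - 1) ^ 2 = k ^ 2 + 1 - 2 * k by ring, zpow_sub₀ hq0, zpow_add₀ hq0, zpow_one,
        zpow_mul]
      rfl
    have z2 : q ^ ((k + 1) ^ 2) = q ^ (k ^ 2) * q * (q ^ 2) ^ k := by
      rw [show (k + 1) ^ 2 = k ^ 2 + 1 + 2 * k by ring, zpow_add₀ hq0, zpow_add₀ hq0, zpow_one,
        zpow_mul]
      rfl
    rw [z1, z2, zpow_sub₀ hw, zpow_add₀ hw, zpow_sub₀ hq2, zpow_add₀ hq2, zpow_add₀ hq2,
      zpow_add₀ hq2, zpow_sub₀ hq2, zpow_add₀ hq2, zpow_one, zpow_one, zpow_natCast, hs]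
    generalize (q ^ 2) ^ k = Y at hY ⊢
    field_simp
    ring

/-! ### Passage to the infinite triple product -/

lemma tendsto_qFac {p : ℂ} (hp : ‖p‖ < 1) :
    Tendsto (qFac p) atTop (𝓝 (∏' j : ℕ, (1 - p ^ (j + 1)))) :=
  (ModularForm.multipliable_one_sub_pow hp).tendsto_prod_tprod_nat

lemma tprod_one_sub_pow_succ_ne_zero {p : ℂ} (hp : ‖p‖ < 1) :
    ∏' j : ℕ, (1 - p ^ (j + 1)) ≠ 0 := by
  refine tprod_one_add_ne_zero_of_summable (f := fun j : ℕ => -p ^ (j + 1)) ?_ ?_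
  · exact fun j => by simpa [← sub_eq_add_neg] using one_sub_pow_succ_ne_zero hp j
  · simpa using (summable_nat_add_iff 1).mpr (summable_geometric_of_lt_one (norm_nonneg _) hp)

lemma tendsto_qFacInv {p : ℂ} (hp : ‖p‖ < 1) :
    Tendsto (qFacInv p) atTop (𝓝 (∏' j : ℕ, (1 - p ^ (j + 1)))⁻¹) := by
  have hN : Tendsto Int.toNat atTop atTop :=
    tendsto_atTop.mpr fun n => by
      filter_upwards [eventually_ge_atTop (n : ℤ)] with m hm
      omega
  have h := ((tendsto_qFac hp).inv₀ (tprod_one_sub_pow_succ_ne_zero hp)).comp hN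
  refine h.congr' ?_
  filter_upwards [eventually_ge_atTop 0] with m hm
  simp [qFacInv, hm]

lemma exists_norm_qFac_le {p : ℂ} (hp : ‖p‖ < 1) : ∃ C, ∀ m, ‖qFac p m‖ ≤ C := by
  obtain ⟨C, hC⟩ := (tendsto_qFac hp).norm.bddAbove_range
  exact ⟨C, fun m => hC ⟨m, rfl⟩⟩

lemma exists_norm_qFacInv_le {p : ℂ} (hp : ‖p‖ < 1) :
    ∃ C, 0 ≤ C ∧ ∀ m, ‖qFacInv p m‖ ≤ C := by
  obtain ⟨C, hC⟩ :=
    ((tendsto_qFac hp).inv₀ (tprod_one_sub_pow_succ_ne_zero hp)).norm.bddAbove_range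
  have hC' : ∀ m, ‖(qFac p m)⁻¹‖ ≤ C := fun m => hC ⟨m, rfl⟩
  have h0 : 0 ≤ C := (norm_nonneg _).trans (hC' 0)
  refine ⟨C, h0, fun m => ?_⟩
  unfold qFacInv
  split_ifs
  · exact hC' _
  · simpa using h0

lemma tendsto_qPochInf {x y : ℂ} (hy : ‖y‖ < 1) :
    Tendsto (fun n => ∏ j ∈ Finset.range n, (1 - x * y ^ j)) atTop (𝓝 (qPochInf x y)) := by
  refine Multipliable.tendsto_prod_tprod_nat ?_
  simp_rw [sub_eq_add_neg]
  refine multipliable_one_add_of_summable ?_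
  simpa using (summable_geometric_of_lt_one (norm_nonneg _) hy).mul_left ‖x‖

/-- The Jacobi triple product identity, as the termwise limit (by dominated convergence) of its
finite version. -/
lemma triple_product {q w : ℂ} (hq0 : q ≠ 0) (hq : ‖q‖ < 1) (hw : w ≠ 0)
    (hsum : Summable fun k : ℤ => ‖q ^ (k ^ 2) * w ^ k‖) :
    ∑' k : ℤ, q ^ (k ^ 2) * w ^ k = (∏' j : ℕ, (1 - (q ^ 2) ^ (j + 1))) *
      (qPochInf (-q * w) (q ^ 2) * qPochInf (-q * w⁻¹) (q ^ 2)) := by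
  have hp : ‖q ^ 2‖ < 1 := by rw [norm_pow]; exact pow_lt_one₀ (norm_nonneg _) hq (by omega)
  set P := ∏' j : ℕ, (1 - (q ^ 2) ^ (j + 1)) with hP
  have hP0 : P ≠ 0 := tprod_one_sub_pow_succ_ne_zero hp
  obtain ⟨A, hA⟩ := exists_norm_qFac_le hp
  obtain ⟨B, hB0, hB⟩ := exists_norm_qFacInv_le hp
  have hA0 : 0 ≤ A := (norm_nonneg _).trans (hA 0)
  have hcast : Tendsto (fun n : ℕ => (n : ℤ)) atTop atTop := tendsto_natCast_atTop_atTop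
  have hlim : Tendsto (fun n : ℕ => ∑' k : ℤ, qFac (q ^ 2) (2 * n) * qFacInv (q ^ 2) (n - k)
      * qFacInv (q ^ 2) (n + k) * (q ^ (k ^ 2) * w ^ k)) atTop
      (𝓝 (∑' k : ℤ, P * P⁻¹ * P⁻¹ * (q ^ (k ^ 2) * w ^ k))) := by
    refine tendsto_tsum_of_dominated_convergence
      (bound := fun k : ℤ => A * B * B * ‖q ^ (k ^ 2) * w ^ k‖) (hsum.mul_left _) ?_ ?_
    · intro k
      refine Tendsto.mul_const _ (Tendsto.mul (Tendsto.mul ?_ ?_) ?_)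
      · exact (tendsto_qFac hp).comp (tendsto_id.const_mul_atTop' (by norm_num : 0 < 2))
      · exact (tendsto_qFacInv hp).comp (tendsto_atTop_add_const_right _ (-k) hcast)
      · exact (tendsto_qFacInv hp).comp (tendsto_atTop_add_const_right _ k hcast)
    · refine Eventually.of_forall fun n k => ?_
      rw [norm_mul, norm_mul, norm_mul]
      gcongr
      · exact hA _
      · exact hB _
      · exact hB _
  have hlim2 : Tendsto (fun n : ℕ => ∏ i ∈ Finset.range n,
      ((1 + q ^ (2 * i + 1) * w) * (1 + q ^ (2 * i + 1) * w⁻¹))) atTop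
      (𝓝 (qPochInf (-q * w) (q ^ 2) * qPochInf (-q * w⁻¹) (q ^ 2))) := by
    refine ((tendsto_qPochInf hp).mul (tendsto_qPochInf hp)).congr fun n => ?_
    rw [← Finset.prod_mul_distrib]
    refine Finset.prod_congr rfl fun i _ => ?_
    ring
  have key := tendsto_nhds_unique
    (hlim.congr fun n => (hasSum_finite_triple hq0 hq hw n).tsum_eq) hlim2
  rw [tsum_mul_left, mul_inv_cancel₀ hP0, one_mul] at key
  rw [← key, mul_inv_cancel_left₀ hP0]

/-- The Jacobi triple product for Mathlib's two-variable theta function. -/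
lemma jacobiTheta₂_eq_prod (u : ℂ) {τ : ℂ} (hτ : 0 < τ.im) :
    jacobiTheta₂ u τ = (∏' j : ℕ, (1 - ModularForm.eta_q j τ)) *
      (qPochInf (-cexp (π * I * τ) * cexp (2 * π * I * u)) (cexp (2 * π * I * τ)) *
       qPochInf (-cexp (π * I * τ) * cexp (-(2 * π * I * u))) (cexp (2 * π * I * τ))) := by
  have hterm : ∀ k : ℤ, jacobiTheta₂_term k u τ
      = cexp (π * I * τ) ^ (k ^ 2) * cexp (2 * π * I * u) ^ k := by
    intro k
    rw [jacobiTheta₂_term, ← Complex.exp_int_mul, ← Complex.exp_int_mul, ← Complex.exp_add]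
    push_cast
    ring_nf
  have hq2 : cexp (2 * π * I * τ) = cexp (π * I * τ) ^ 2 := by
    rw [← Complex.exp_nat_mul]; push_cast; ring_nf
  have hq : ‖cexp (π * I * τ)‖ < 1 := by
    rw [Complex.norm_exp, Real.exp_lt_one_iff]
    have : (π * I * τ).re = -(π * τ.im) := by simp
    rw [this]
    nlinarith [mul_pos Real.pi_pos hτ]
  have hs := ((summable_jacobiTheta₂_term_iff u τ).mpr hτ).norm
  simp_rw [hterm] at hs
  rw [jacobiTheta₂]
  simp_rw [hterm, ModularForm.eta_q_eq_pow, hq2, Complex.exp_neg]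
  exact triple_product (Complex.exp_ne_zero _) hq (Complex.exp_ne_zero _) hs

/-! ### Modular transformation -/

lemma sqrt_I_mul_cpow {τ : ℂ} (hτ : 0 < τ.im) :
    Complex.sqrt I * (-I * τ) ^ (1 / 2 : ℂ) = Complex.sqrt τ := by
  have h0 : τ ≠ 0 := by rintro rfl; simp at hτ
  have h1 : -I * τ ≠ 0 := by simp [h0]
  have hre : 0 < (-I * τ).re := by simpa using hτ
  have harg := abs_lt.mp (Complex.abs_arg_lt_pi_div_two_iff.mpr (Or.inl hre))
  have hlog : Complex.log τ = Complex.log I + Complex.log (-I * τ) := by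
    rw [← (Complex.log_mul_eq_add_log_iff I_ne_zero h1).mpr]
    · congr 1
      linear_combination τ * I_sq
    · rw [Complex.arg_I]
      constructor <;> linarith [harg.1, harg.2]
  rw [_root_.sqrt_eq_exp I_ne_zero, _root_.sqrt_eq_exp h0, Complex.cpow_def_of_ne_zero h1,
    ← Complex.exp_add, hlog]
  ring_nf

lemma phibDen_mul (b z : ℂ) (hb : b ≠ 0) : phibDen b z * phibDen b (-z) =
    qPochInf (-cexp (π * I * b ^ 2) * cexp (2 * π * I * (-I * b * z))) (cexp (2 * π * I * b ^ 2)) *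
    qPochInf (-cexp (π * I * b ^ 2) * cexp (-(2 * π * I * (-I * b * z))))
      (cexp (2 * π * I * b ^ 2)) := by
  have h : ∀ v : ℂ, cexp (2 * π * (v + cb b) * b)
      = -cexp (π * I * b ^ 2) * cexp (2 * π * I * (-I * b * v)) := by
    intro v
    rw [show 2 * (π : ℂ) * (v + cb b) * b
        = π * I + (π * I * b ^ 2 + 2 * π * I * (-I * b * v)) by
      unfold cb
      field_simp
      linear_combination (2 * v * b) * I_sq]
    rw [Complex.exp_add, Complex.exp_add, Complex.exp_pi_mul_I]
    ring
  rw [phibDen, phibDen, h, h]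
  ring_nf

lemma phibNum_mul (b z : ℂ) (hb : b ≠ 0) : phibNum b z * phibNum b (-z) =
    qPochInf (-cexp (π * I * (-1 / b ^ 2)) * cexp (2 * π * I * (-I * b * z / b ^ 2)))
      (cexp (2 * π * I * (-1 / b ^ 2))) *
    qPochInf (-cexp (π * I * (-1 / b ^ 2)) * cexp (-(2 * π * I * (-I * b * z / b ^ 2))))
      (cexp (2 * π * I * (-1 / b ^ 2))) := by
  have h : ∀ v : ℂ, cexp (2 * π * (v - cb b) * b⁻¹)
      = -cexp (π * I * (-1 / b ^ 2)) * cexp (2 * π * I * (-I * b * v / b ^ 2)) := by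
    intro v
    rw [show 2 * (π : ℂ) * (v - cb b) * b⁻¹
        = -(π * I) + (π * I * (-1 / b ^ 2) + 2 * π * I * (-I * b * v / b ^ 2)) by
      unfold cb
      field_simp
      linear_combination (2 * v * b) * I_sq]
    rw [Complex.exp_add, Complex.exp_add, Complex.exp_neg, Complex.exp_pi_mul_I]
    ring
  have h2 : -(2 * (π : ℂ) * I * b⁻¹ ^ 2) = 2 * π * I * (-1 / b ^ 2) := by
    field_simp
  rw [phibNum, phibNum, h, h, h2]
  ring_nf

/-- The inversion relation for `φ_b` cleared of denominators, with its constant still a ratio of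
eta products. It is the functional equation of theta, read through the triple product. -/
lemma theta_step {b : ℂ} (hb : b ≠ 0) (hτ : 0 < (b ^ 2).im) (hτ' : 0 < (-1 / b ^ 2).im) (z : ℂ) :
    (∏' j : ℕ, (1 - ModularForm.eta_q j (b ^ 2))) * (phibDen b z * phibDen b (-z)) =
      1 / (-I * b ^ 2) ^ (1 / 2 : ℂ) * cexp (π * I * z ^ 2) *
      ((∏' j : ℕ, (1 - ModularForm.eta_q j (-1 / b ^ 2))) * (phibNum b z * phibNum b (-z))) := by
  rw [phibDen_mul b z hb, phibNum_mul b z hb, ← jacobiTheta₂_eq_prod _ hτ,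
    ← jacobiTheta₂_eq_prod _ hτ', jacobiTheta₂_functional_equation]
  congr 3
  field_simp
  linear_combination (-z ^ 2) * I_sq

/-- The transformation `τ ↦ -1/τ` of the Dedekind eta function, in terms of its product part. -/
lemma eta_step {τ : ℂ} (hτ : 0 < τ.im) :
    ∏' j : ℕ, (1 - ModularForm.eta_q j τ) = cexp (-(π * I * (τ + τ⁻¹) / 12)) *
      (1 / (-I * τ) ^ (1 / 2 : ℂ)) * ∏' j : ℕ, (1 - ModularForm.eta_q j (-1 / τ)) := by
  have h0 : τ ≠ 0 := by rintro rfl; simp at hτ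
  have hs : Complex.sqrt I ≠ 0 := by
    rw [_root_.sqrt_eq_exp I_ne_zero]; exact Complex.exp_ne_zero _
  have hc : (-I * τ) ^ (1 / 2 : ℂ) ≠ 0 := by
    rw [Complex.cpow_def_of_ne_zero (by simp [h0])]; exact Complex.exp_ne_zero _
  have h := ModularForm.eta_comp_eq_csqrt_I_inv hτ
  simp only [Function.comp, Pi.smul_apply, Pi.mul_apply, smul_eq_mul, ← sqrt_I_mul_cpow hτ,
    ModularForm.eta, Function.Periodic.qParam] at h
  have hexp : cexp (2 * π * I * (-1 / τ) / (24 : ℝ))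
      = cexp (-(π * I * (τ + τ⁻¹) / 12)) * cexp (2 * π * I * τ / (24 : ℝ)) := by
    rw [← Complex.exp_add]
    congr 1
    push_cast
    field_simp
    ring
  rw [hexp] at h
  have hE := Complex.exp_ne_zero (2 * π * I * τ / (24 : ℝ))
  generalize ∏' j : ℕ, (1 - ModularForm.eta_q j τ) = P at h ⊢
  generalize ∏' j : ℕ, (1 - ModularForm.eta_q j (-1 / τ)) = Q at h ⊢
  generalize cexp (2 * π * I * τ / (24 : ℝ)) = E at h hE
  field_simp at h ⊢
  linear_combination -h

end PhibInversion

/-- Inversion relation for the non-compact quantum dilogarithm: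
`φ_b(z)·φ_b(−z) = e^{−iπz²}·ζ_inv` with `ζ_inv = e^{iπ(1+2c_b²)/6}`,
wherever both sides are defined. -/
theorem phib_inversion (b : ℂ) (hre : 0 < b.re) (him : 0 < b.im) :
    ∀ z : ℂ, phibDen b z ≠ 0 → phibDen b (-z) ≠ 0 →
      phib b z * phib b (-z)
        = Complex.exp (-((Real.pi : ℂ) * Complex.I * z ^ 2)) *
          Complex.exp ((Real.pi : ℂ) * Complex.I * (1 + 2 * cb b ^ 2) / 6) := by
  intro z hz hz'
  have hb : b ≠ 0 := by rintro rfl; simp at him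
  have hτ : 0 < (b ^ 2).im := by
    rw [sq, Complex.mul_im]; nlinarith [mul_pos hre him]
  have hτ' : 0 < (-1 / b ^ 2).im := by
    rw [neg_div, one_div, Complex.neg_im, Complex.inv_im, neg_div, neg_neg]
    exact div_pos hτ (Complex.normSq_pos.mpr (pow_ne_zero 2 hb))
  have h1 := PhibInversion.theta_step hb hτ hτ' z
  rw [PhibInversion.eta_step hτ] at h1
  have hQ := ModularForm.eta_tprod_ne_zero hτ'
  have hc : (-I * b ^ 2) ^ (1 / 2 : ℂ) ≠ 0 := by
    rw [Complex.cpow_def_of_ne_zero (by simp [hb])]; exact Complex.exp_ne_zero _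
  have hζ : cexp ((Real.pi : ℂ) * Complex.I * (1 + 2 * cb b ^ 2) / 6)
      = cexp (-(Real.pi * I * (b ^ 2 + (b ^ 2)⁻¹) / 12)) := by
    congr 1
    unfold cb
    field_simp
    linear_combination 12 * (b ^ 2 + 1) ^ 2 * I_sq
  rw [hζ, phib, phib, div_mul_div_comm, div_eq_iff (mul_ne_zero hz hz'), Complex.exp_neg]
  have hE := Complex.exp_ne_zero ((Real.pi : ℂ) * I * z ^ 2)
  generalize ∏' j : ℕ, (1 - ModularForm.eta_q j (-1 / b ^ 2)) = Q at h1 hQ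
  field_simp at h1 ⊢
  linear_combination -h1
end

section
/- Let H be a complex Hilbert space, let T, P, A₁, A₂ be unitary operators on H, and let ζ be a nonzero complex number. Assume: P² = 1, P A₁ P = A₂, A₁ A₂ = A₂ A₁, A₁³ = A₂³ = 1, and T · A₁ · (P T P) = ζ · A₁ A₂ P. Then T satisfies the symmetry T = A₂ A₁⁻¹ · (P T P) · A₁ A₂⁻¹. -/
/-!
Write `S = P T P` and `X = A₁ A₂ P`. The relation reads `T A₁ S = ζ X`; conjugating it by `P`,
which exchanges `A₁` and `A₂` and hence commutes with `A₁ A₂`, gives `S A₂ T = ζ X`.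
Evaluating `T A₁ S A₂ T` in both ways yields `ζ X A₂ T = ζ T A₁ X`, and cancelling `ζ` leaves an
identity between unitaries, which `A₁³ = 1` turns into the claim.
-/

/-- The part of the argument that takes place in a group, after the scalar has been cancelled. -/
theorem eq_conj_flip_of_intertwine {G : Type*} [Group G] {t p a b : G}
    (hp : p * p = 1) (hpa : p * a * p = b) (hab : a * b = b * a)
    (ha : a ^ 3 = 1)
    (h : a * b * p * b * t = t * a * (a * b * p)) :
    t = b * a⁻¹ * (p * t * p) * a * b⁻¹ := by
  have hpb : p * b = a * p := by
    rw [← hpa, ← mul_assoc, ← mul_assoc, hp, one_mul]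
  have ha2 : a * a = a⁻¹ := eq_inv_of_mul_eq_one_left (by rw [← ha, pow_three'])
  have hp' : p⁻¹ = p := inv_eq_of_mul_eq_one_left hp
  have hc : Commute a b := hab
  have h1 : a⁻¹ * b * p * t = t * (a⁻¹ * b * p) := by
    calc a⁻¹ * b * p * t = a * (a * b) * p * t := by rw [← ha2]; group
      _ = a * (b * a) * p * t := by rw [hab]
      _ = a * b * (a * p) * t := by group
      _ = t * a * (a * b * p) := by rw [← hpb, ← h]; group
      _ = t * (a⁻¹ * b * p) := by rw [← ha2]; group
  calc t = (a⁻¹ * b * p * t) * (a⁻¹ * b * p)⁻¹ := by rw [h1]; group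
    _ = (a⁻¹ * b) * (p * t * p) * (b⁻¹ * a) := by
      rw [mul_inv_rev, hp']; group
    _ = b * a⁻¹ * (p * t * p) * a * b⁻¹ := by
      rw [hc.inv_left.eq, (hc.inv_right.eq).symm]; simp only [mul_assoc]


/-- **Symmetry of a semi-symmetric T-matrix.** Let `H` be a complex Hilbert space and
`T, P, A₁, A₂` unitary operators on `H` with `P² = 1`, `P A₁ P = A₂`, `A₁A₂ = A₂A₁`,
`A₁³ = A₂³ = 1`, and `T·A₁·(PTP) = ζ·A₁A₂P` for a nonzero scalar `ζ`. Then
`T = A₂ A₁⁻¹ (PTP) A₁ A₂⁻¹`. -/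
theorem semi_symmetric_T_matrix_symmetry
    {H : Type*} [NormedAddCommGroup H] [InnerProductSpace ℂ H] [CompleteSpace H]
    (T P A₁ A₂ : unitary (H →L[ℂ] H)) (ζ : ℂ) (hζ : ζ ≠ 0)
    (hP2 : P * P = 1) (hPA : P * A₁ * P = A₂) (hcomm : A₁ * A₂ = A₂ * A₁)
    (hA1 : A₁ ^ 3 = 1) (hA2 : A₂ ^ 3 = 1)
    (hrel : (T : H →L[ℂ] H) * (A₁ : H →L[ℂ] H) *
        ((P : H →L[ℂ] H) * (T : H →L[ℂ] H) * (P : H →L[ℂ] H))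
      = ζ • ((A₁ : H →L[ℂ] H) * (A₂ : H →L[ℂ] H) * (P : H →L[ℂ] H))) :
    (T : H →L[ℂ] H)
      = (A₂ : H →L[ℂ] H) * ((A₁⁻¹ : unitary (H →L[ℂ] H)) : H →L[ℂ] H) *
          ((P : H →L[ℂ] H) * (T : H →L[ℂ] H) * (P : H →L[ℂ] H)) *
          (A₁ : H →L[ℂ] H) * ((A₂⁻¹ : unitary (H →L[ℂ] H)) : H →L[ℂ] H) := by
  have hpb : P * A₂ = A₁ * P := by
    rw [← hPA, ← mul_assoc, ← mul_assoc, hP2, one_mul]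
  have hpa : P * A₁ = A₂ * P := by rw [← hPA, mul_assoc, hP2, mul_one]
  have cP2 := congrArg (Subtype.val) hP2
  have cpa := congrArg (Subtype.val) hpa
  have cpb := congrArg (Subtype.val) hpb
  have cab := congrArg (Subtype.val) hcomm
  have key : A₁ * A₂ * P * A₂ * T = T * A₁ * (A₁ * A₂ * P) := by
    apply Subtype.ext
    simp only [Submonoid.coe_mul, Submonoid.coe_one] at cP2 cpa cpb cab ⊢
    generalize (T : H →L[ℂ] H) = t at *
    generalize (P : H →L[ℂ] H) = p at *
    generalize (A₁ : H →L[ℂ] H) = a at *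
    generalize (A₂ : H →L[ℂ] H) = b at *
    -- The relation with the two legs exchanged.
    have hflip : p * t * p * b * t = ζ • (a * b * p) := by
      calc p * t * p * b * t = p * t * (p * b) * t * (p * p) := by
            rw [cP2, mul_one]; simp only [mul_assoc]
        _ = p * (t * a * (p * t * p)) * p := by rw [cpb]; simp only [mul_assoc]
        _ = ζ • (p * a * b * (p * p)) := by
            rw [hrel, mul_smul_comm, smul_mul_assoc]; simp only [mul_assoc]
        _ = ζ • (a * b * p) := by
            rw [cP2, mul_one, cpa, mul_assoc b p b, cpb, ← mul_assoc, cab]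
    apply smul_right_injective (H →L[ℂ] H) hζ
    change ζ • (a * b * p * b * t) = ζ • (t * a * (a * b * p))
    calc ζ • (a * b * p * b * t) = t * a * (p * t * p) * b * t := by
          rw [hrel, smul_mul_assoc, smul_mul_assoc]
      _ = t * a * (p * t * p * b * t) := by simp only [mul_assoc]
      _ = ζ • (t * a * (a * b * p)) := by rw [hflip, mul_smul_comm]
  exact congrArg Subtype.val (eq_conj_flip_of_intertwine hP2 hPA hcomm hA1 key)
end
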